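/- Let D be an integral domain and ⋆ a semistar operation on D. The following are equivalent: (1) D is a ⋆-Dedekind domain; (2) the Nagata ring Na(D,⋆) is a principal ideal domain; (3) Na(D,⋆) is a Dedekind domain. -/

import Mathlib

/-!
Let `M` be quasi-`⋆_f`-maximal with `D_M` a valuation ring. Then `I^⋆ ∩ D ⊆ I·D_M` for every nonzero
finitely generated ideal `I` of `D`. Over `D_M` contents are principal, so for `f ≠ 0` the inclusion
`c(g) ⊆ c(f)^⋆` makes `f` divide some multiple `h·g` with `h ∉ M[X]`. Since a nonzero polynomial
lies in `N(⋆)` iff it avoids every `M[X]`, in a P⋆MD that inclusion forces `f ∣ g` in `Na(D,⋆)`.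
If `D` is also ⋆-Noetherian, each nonzero ideal `A` of `D[X]` contains an `f` whose content has the
same `⋆`-closure as the ideal generated by all coefficients of `A`, and this `f` generates
`A·Na(D,⋆)`.

Conversely, quasi-`⋆_f`-ideals are contracted from `Na(D,⋆)`, which transfers the chain condition
to `D`; and each quasi-`⋆_f`-maximal `M` generates a proper ideal of `Na(D,⋆)`, so divisibility of
constants in the localization of `Na(D,⋆)` at a maximal ideal containing it descends to `D_M`.
-/

open scoped Pointwise

section SemistarDefs

variable {D : Type*} [CommRing D] [IsDomain D]
variable {K : Type*} [Field K] [Algebra D K] [IsFractionRing D K]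

/-- `star` is a semistar operation on the integral domain `D` with quotient field `K`:
a map on (nonzero) `D`-submodules of `K` satisfying `(xE)^⋆ = x·E^⋆`, monotonicity,
extensivity and idempotence. -/
structure IsSemistarOperation (star : Submodule D K → Submodule D K) : Prop where
  ne_bot : ∀ {E : Submodule D K}, E ≠ ⊥ → star E ≠ ⊥
  map_smul : ∀ (x : K), x ≠ 0 → ∀ {E : Submodule D K}, E ≠ ⊥ →
    star (Submodule.map (LinearMap.mulLeft D x) E) = Submodule.map (LinearMap.mulLeft D x) (star E)
  mono : ∀ {E F : Submodule D K}, E ≠ ⊥ → F ≠ ⊥ → E ≤ F → star E ≤ star F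
  le_star : ∀ {E : Submodule D K}, E ≠ ⊥ → E ≤ star E
  star_star : ∀ {E : Submodule D K}, E ≠ ⊥ → star (star E) = star E

/-- The image in `K` of an ideal `I` of `D`, as a `D`-submodule of `K`. -/
def idealExt (K : Type*) [Field K] [Algebra D K] (I : Ideal D) : Submodule D K :=
  Submodule.map (Algebra.linearMap D K) I

/-- `I` is a quasi-⋆-ideal: a nonzero ideal of `D` with `I = I^⋆ ∩ D`. -/
def QuasiStarIdeal (star : Submodule D K → Submodule D K) (I : Ideal D) : Prop :=
  I ≠ ⊥ ∧ Submodule.comap (Algebra.linearMap D K) (star (idealExt K I)) = I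

/-- `P` is a quasi-⋆-prime: a prime ideal which is a quasi-⋆-ideal. -/
def QuasiStarPrime (star : Submodule D K → Submodule D K) (P : Ideal D) : Prop :=
  P.IsPrime ∧ QuasiStarIdeal star P

/-- `M` is a quasi-⋆-maximal ideal: maximal in the set of proper quasi-⋆-ideals of `D`. -/
def QuasiStarMaximal (star : Submodule D K → Submodule D K) (M : Ideal D) : Prop :=
  QuasiStarIdeal star M ∧ M ≠ ⊤ ∧
    ∀ J : Ideal D, QuasiStarIdeal star J → J ≠ ⊤ → M ≤ J → J = M

/-- The finite-type semistar operation `⋆_f` associated to `⋆`: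
`E^{⋆_f} = ⋃ { F^⋆ : F nonzero finitely generated, F ⊆ E }`. -/
def finTypeOp (star : Submodule D K → Submodule D K) : Submodule D K → Submodule D K :=
  fun E => ⨆ (F : Submodule D K) (_ : F ≠ ⊥) (_ : F.FG) (_ : F ≤ E), star F

/-- The extension `E·D_Q` of a `D`-submodule `E` of `K` to the localization of `D` at
(the complement of) `Q`, described as `{ x ∈ K : s·x ∈ E for some s ∉ Q }`. -/
def extendToPrime (Q : Ideal D) (E : Submodule D K) : Submodule D K :=
  Submodule.span D {x : K | ∃ s : D, s ∉ Q ∧ algebraMap D K s * x ∈ E}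

/-- The stable semistar operation of finite type `⋆̃` associated to `⋆`:
`E^⋆̃ = ⋂ { E·D_Q : Q a quasi-⋆_f-maximal ideal of D }`. -/
def stableOp (star : Submodule D K → Submodule D K) : Submodule D K → Submodule D K :=
  fun E => ⨅ (Q : Ideal D) (_ : QuasiStarMaximal (finTypeOp star) Q), extendToPrime Q E

/-- A rank-one discrete valuation ring: a (domain which is a) local PID which is not a field. -/
def IsDVR (R : Type*) [CommRing R] : Prop :=
  ∃ h : IsDomain R, @IsDiscreteValuationRing R _ h

/-- A valuation domain. -/
def IsValuationDomain (R : Type*) [CommRing R] : Prop :=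
  ∃ h : IsDomain R, @ValuationRing R _ h

/-- `D` is a ⋆-almost Dedekind domain: `D_M` is a rank-one discrete valuation ring for
every quasi-⋆_f-maximal ideal `M` of `D`. -/
def StarADD (star : Submodule D K → Submodule D K) : Prop :=
  ∀ (M : Ideal D) [M.IsPrime], QuasiStarMaximal (finTypeOp star) M →
    IsDVR (Localization.AtPrime M)

/-- `D` is a Prüfer ⋆-multiplication domain: `D_M` is a valuation domain for every
quasi-⋆_f-maximal ideal `M` of `D`. -/
def StarPMD (star : Submodule D K → Submodule D K) : Prop :=
  ∀ (M : Ideal D) [M.IsPrime], QuasiStarMaximal (finTypeOp star) M →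
    IsValuationDomain (Localization.AtPrime M)

/-- `D` is ⋆-Noetherian: ascending chain condition on quasi-⋆-ideals. -/
def StarNoetherian (star : Submodule D K → Submodule D K) : Prop :=
  ∀ c : ℕ →o Ideal D, (∀ n, QuasiStarIdeal star (c n)) → ∃ n, ∀ m, n ≤ m → c m = c n

/-- `D` is a ⋆-Dedekind domain: ⋆-Noetherian and a P⋆MD. -/
def StarDedekind (star : Submodule D K → Submodule D K) : Prop :=
  StarNoetherian star ∧ StarPMD star

/-- `D` has the ⋆_f-finite character property: every nonzero element of `D` lies in only
finitely many quasi-⋆_f-maximal ideals. -/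
def StarFiniteCharacter (star : Submodule D K → Submodule D K) : Prop :=
  ∀ d : D, d ≠ 0 → {M : Ideal D | QuasiStarMaximal (finTypeOp star) M ∧ d ∈ M}.Finite

/-- The `v`-operation `E ↦ (D : (D : E))`. -/
def vOp : Submodule D K → Submodule D K := fun E => 1 / (1 / E)

/-- A nonzero `D`-submodule `E` of `K` is quasi-∗-invertible if `(E·(D^∗ : E))^∗ = D^∗`. -/
def QuasiStarInvertible (star : Submodule D K → Submodule D K) (E : Submodule D K) : Prop :=
  star (E * (star 1 / E)) = star (1 : Submodule D K)

/-- `D` has the ∗-cancellation law: for nonzero fractional ideals `A`, `B`, `C`,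
`(AB)^∗ = (AC)^∗` implies `B^∗ = C^∗`. -/
def StarCancellation (star : Submodule D K → Submodule D K) : Prop :=
  ∀ A B C : Submodule D K, A ≠ ⊥ → B ≠ ⊥ → C ≠ ⊥ →
    IsFractional (nonZeroDivisors D) A → IsFractional (nonZeroDivisors D) B →
    IsFractional (nonZeroDivisors D) C →
    star (A * B) = star (A * C) → star B = star C

/-- The ∗-dimension of `D`: the supremum of the lengths of chains of quasi-∗-prime ideals
of `D` (between `(0)` and a quasi-∗-prime). -/
noncomputable def starDim (star : Submodule D K → Submodule D K) : ℕ∞ :=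
  ⨆ (k : ℕ) (_ : ∃ c : Fin k → Ideal D, StrictMono c ∧ ∀ i, QuasiStarPrime star (c i)),
    (k : ℕ∞)

/-- A submodule `T` of `K` (containing the image of an integral domain with quotient
field `K`) is integrally closed (in `K`) if every `x ∈ K` satisfying a monic polynomial
equation with coefficients in `T` belongs to `T`. -/
def IntegrallyClosedSub (T : Submodule D K) : Prop :=
  ∀ x : K, (∃ (n : ℕ) (c : Fin n → K), (∀ i, c i ∈ T) ∧
    x ^ n = ∑ i : Fin n, c i * x ^ (i : ℕ)) → x ∈ T

/-- The content ideal `c(p)` of a polynomial: the ideal generated by its coefficients. -/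
def contentIdeal (p : Polynomial D) : Ideal D := Ideal.span (Set.range p.coeff)

/-- The multiplicative set `N(⋆) = { h ∈ D[X] : h ≠ 0, c(h)^⋆ = D^⋆ }` (as a submonoid,
via the closure of this multiplicatively closed set). -/
noncomputable def nagataMonoid (star : Submodule D K → Submodule D K) : Submonoid (Polynomial D) :=
  Submonoid.closure
    {p : Polynomial D | p ≠ 0 ∧ star (idealExt K (contentIdeal p)) = star (1 : Submodule D K)}

/-- The Nagata ring `Na(D,⋆) = D[X]_{N(⋆)}`. -/
abbrev NagataRing (star : Submodule D K → Submodule D K) :=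
  Localization (nagataMonoid star)

/-- `V` is a valuation overring of `D` (inside the quotient field `K`): `D ⊆ V ⊆ K` and
for every nonzero `x ∈ K`, `x ∈ V` or `x⁻¹ ∈ V`. -/
def IsValuationOverring (D : Type*) [CommRing D] {K : Type*} [Field K] [Algebra D K]
    (V : Subring K) : Prop :=
  (∀ d : D, algebraMap D K d ∈ V) ∧ ∀ x : K, x ≠ 0 → (x ∈ V ∨ x⁻¹ ∈ V)

/-- `V` is a ∗-valuation overring of `D`: a valuation overring such that `F^∗ ⊆ FV` for
every nonzero finitely generated `D`-submodule `F` of `K`. -/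
def IsStarValuationOverring (star : Submodule D K → Submodule D K) (V : Subring K) : Prop :=
  IsValuationOverring D V ∧
    ∀ F : Submodule D K, F ≠ ⊥ → F.FG →
      star F ≤ Submodule.span D ((F : Set K) * (V : Set K))

/-- `D` is a Krull domain: there is a family of rank-one discrete valuation overrings of `D`
with quotient field `K` whose intersection is `D`, with finite character. -/
def IsKrullDomain (D : Type*) [CommRing D] (K : Type*) [Field K] [Algebra D K] : Prop :=
  ∃ 𝒱 : Set (Subring K),
    (∀ V ∈ 𝒱, (∀ d : D, algebraMap D K d ∈ V) ∧ IsDVR V ∧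
      ∀ x : K, ∃ a ∈ V, ∃ b ∈ V, b ≠ 0 ∧ x * b = a) ∧
    (⋂ V ∈ 𝒱, (V : Set K)) = Set.range (algebraMap D K) ∧
    ∀ d : D, d ≠ 0 → {V ∈ 𝒱 | ¬ ∃ y ∈ V, algebraMap D K d * y = 1}.Finite

end SemistarDefs

section Polynomial

open Polynomial

variable {R : Type*}

theorem contentIdeal_eq_polynomial_contentIdeal [CommRing R] (p : R[X]) :
    _root_.contentIdeal p = p.contentIdeal := by
  refine le_antisymm (Ideal.span_le.2 ?_) (Ideal.span_mono ?_)
  · rintro _ ⟨i, rfl⟩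
    exact p.coeff_mem_contentIdeal i
  · intro r hr
    obtain ⟨i, -, rfl⟩ := mem_coeffs_iff.1 hr
    exact ⟨i, rfl⟩

theorem contentIdeal_le_iff_forall_coeff_mem [CommSemiring R] {p : R[X]} {I : Ideal R} :
    p.contentIdeal ≤ I ↔ ∀ i, p.coeff i ∈ I := by
  refine ⟨fun h i ↦ h (p.coeff_mem_contentIdeal i), fun h ↦ Ideal.span_le.2 fun r hr ↦ ?_⟩
  obtain ⟨i, -, rfl⟩ := mem_coeffs_iff.1 hr
  exact h i

theorem mem_map_C_iff_contentIdeal_le [CommSemiring R] {p : R[X]} {I : Ideal R} :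
    p ∈ I.map C ↔ p.contentIdeal ≤ I := by
  rw [Ideal.mem_map_C_iff, contentIdeal_le_iff_forall_coeff_mem]

/-- The content of an ideal of `R[X]`: the ideal generated by all coefficients of all of its
elements. -/
noncomputable def idealContent [CommSemiring R] (A : Ideal R[X]) : Ideal R :=
  ⨆ p : A, (p : R[X]).contentIdeal

theorem contentIdeal_le_idealContent [CommSemiring R] {A : Ideal R[X]} {p : R[X]} (hp : p ∈ A) :
    p.contentIdeal ≤ idealContent A :=
  le_iSup (fun p : A ↦ (p : R[X]).contentIdeal) ⟨p, hp⟩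

theorem le_map_C_iff_idealContent_le [CommSemiring R] {A : Ideal R[X]} {I : Ideal R} :
    A ≤ I.map C ↔ idealContent A ≤ I := by
  simp only [idealContent, iSup_le_iff, Subtype.forall, ← mem_map_C_iff_contentIdeal_le]
  rfl

theorem idealContent_eq_bot_iff [CommSemiring R] {A : Ideal R[X]} :
    idealContent A = ⊥ ↔ A = ⊥ := by
  rw [← le_bot_iff, ← le_map_C_iff_idealContent_le, Ideal.map_bot, le_bot_iff]

-- Shifting `q` past the degree of `p` keeps the two sets of coefficients apart.
theorem contentIdeal_add_X_pow_mul [CommSemiring R] (p q : R[X]) :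
    (p + X ^ (p.natDegree + 1) * q).contentIdeal = p.contentIdeal ⊔ q.contentIdeal := by
  set n := p.natDegree + 1
  have coeff_low {i : ℕ} (hi : i < n) : (p + X ^ n * q).coeff i = p.coeff i := by
    simp [coeff_X_pow_mul', hi.not_ge]
  have coeff_high (i : ℕ) : (p + X ^ n * q).coeff (i + n) = q.coeff i := by
    rw [coeff_add, coeff_X_pow_mul, coeff_eq_zero_of_natDegree_lt (by omega), zero_add]
  refine le_antisymm (contentIdeal_le_iff_forall_coeff_mem.2 fun i ↦ ?_)
    (sup_le (contentIdeal_le_iff_forall_coeff_mem.2 fun i ↦ ?_)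
      (contentIdeal_le_iff_forall_coeff_mem.2 fun i ↦ ?_))
  · obtain hi | hi := lt_or_ge i n
    · exact coeff_low hi ▸ Ideal.mem_sup_left (coeff_mem_contentIdeal p i)
    · obtain ⟨j, rfl⟩ := Nat.exists_eq_add_of_le' hi
      exact coeff_high j ▸ Ideal.mem_sup_right (coeff_mem_contentIdeal q j)
  · obtain hi | hi := lt_or_ge i n
    · exact coeff_low hi ▸ coeff_mem_contentIdeal _ i
    · rw [coeff_eq_zero_of_natDegree_lt (by omega)]
      exact zero_mem _
  · exact coeff_high i ▸ coeff_mem_contentIdeal _ (i + n)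

theorem exists_mem_le_contentIdeal_of_fg [CommSemiring R] {A : Ideal R[X]} {F : Ideal R}
    (hF : F.FG) (hFA : F ≤ idealContent A) : ∃ p ∈ A, F ≤ p.contentIdeal := by
  have directed : Directed (· ≤ ·) fun p : A ↦ (p : R[X]).contentIdeal := by
    rintro ⟨p, hp⟩ ⟨q, hq⟩
    refine ⟨⟨p + X ^ (p.natDegree + 1) * q, A.add_mem hp (A.mul_mem_left _ hq)⟩, ?_⟩
    simp only [contentIdeal_add_X_pow_mul, le_sup_left, le_sup_right, and_self]
  have compact := (CompleteLattice.isCompactElement_iff_le_of_directed_sSup_le _ F).1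
    ((Submodule.fg_iff_compact F).1 hF)
  have hFA' : F ≤ sSup (Set.range fun p : A ↦ (p : R[X]).contentIdeal) := hFA
  obtain ⟨_, ⟨p, rfl⟩, hp⟩ := compact _ (Set.range_nonempty _) directed.directedOn_range hFA'
  exact ⟨p, p.2, hp⟩

theorem exists_contentIdeal_eq_top_and_eq_C_mul [CommRing R] [IsDomain R] [IsBezout R] {p : R[X]}
    (hp : p ≠ 0) :
    ∃ (c : R) (r : R[X]), p.contentIdeal = Ideal.span {c} ∧ r.contentIdeal = ⊤ ∧ p = C c * r := by
  have principal := IsBezout.isPrincipal_of_FG _ p.contentIdeal_FG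
  obtain ⟨r, hr⟩ := principal.contentIdeal_generator_dvd
  set c := Submodule.IsPrincipal.generator p.contentIdeal
  have hspan : p.contentIdeal = Ideal.span {c} := (p.contentIdeal.span_singleton_generator).symm
  have hc : c ≠ 0 := fun h ↦ hp (by rw [hr, h, C_0, zero_mul])
  refine ⟨c, r, hspan, top_le_iff.1 ((Ideal.span_singleton_mul_right_mono hc).1 ?_), hr⟩
  calc Ideal.span {c} * ⊤ = (C c * r).contentIdeal := by rw [Ideal.mul_top, ← hspan, ← hr]
    _ ≤ Ideal.span {c} * r.contentIdeal :=
      (contentIdeal_mul_le_mul_contentIdeal _ _).trans_eq (by rw [contentIdeal_C])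

theorem exists_contentIdeal_eq_top_and_dvd_mul [CommRing R] [IsDomain R] [IsBezout R] {p q : R[X]}
    (hp : p ≠ 0) (h : q.contentIdeal ≤ p.contentIdeal) :
    ∃ r : R[X], r.contentIdeal = ⊤ ∧ p ∣ r * q := by
  obtain ⟨c, r, hspan, hr, rfl⟩ := exists_contentIdeal_eq_top_and_eq_C_mul hp
  have hq := IsBezout.isPrincipal_of_FG _ q.contentIdeal_FG
  obtain ⟨q', rfl⟩ := (hq.contentIdeal_le_span_iff_dvd c).1 (h.trans_eq hspan)
  exact ⟨r, hr, q', by ring⟩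

end Polynomial

section Localization

variable {R A : Type*} [CommRing R] [CommRing A] [Algebra R A]

theorem algebraMap_dvd_algebraMap_iff_exists_mem (S : Submonoid R) [IsLocalization S A] {a b : R} :
    algebraMap R A a ∣ algebraMap R A b ↔ ∃ s ∈ S, a ∣ s * b := by
  simp only [← Ideal.mem_span_singleton, ← IsLocalization.algebraMap_mem_map_algebraMap_iff S A,
    Ideal.map_span, Set.image_singleton]

theorem valuationRing_of_forall_exists_mem_dvd (S : Submonoid R) [IsLocalization S A] [IsDomain A]
    (h : ∀ a b : R, (∃ s ∈ S, a ∣ s * b) ∨ ∃ s ∈ S, b ∣ s * a) : ValuationRing A := by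
  refine ValuationRing.iff_dvd_total.2 ⟨fun x y ↦ ?_⟩
  obtain ⟨⟨a, s⟩, hx⟩ := IsLocalization.surj S x
  obtain ⟨⟨b, t⟩, hy⟩ := IsLocalization.surj S y
  have hs := IsLocalization.map_units A s
  have ht := IsLocalization.map_units A t
  rw [← hs.mul_right_dvd, ← ht.dvd_mul_right, hx, hy, ← hs.dvd_mul_right (b := x),
    ← ht.mul_right_dvd (a := y), hx, hy]
  simpa only [algebraMap_dvd_algebraMap_iff_exists_mem S] using h a b

theorem exists_mem_span_singleton_mul_le_of_fg (S : Submonoid R) [IsLocalization S A]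
    {I J : Ideal R} (hI : I.FG) (h : I.map (algebraMap R A) ≤ J.map (algebraMap R A)) :
    ∃ s ∈ S, Ideal.span {s} * I ≤ J := by
  rw [Ideal.map_le_iff_le_comap] at h
  induction I, hI using Submodule.fg_induction with
  | singleton x =>
    obtain ⟨s, hs, hsx⟩ := (IsLocalization.algebraMap_mem_map_algebraMap_iff S A J x).1
      (h (Submodule.mem_span_singleton_self x))
    refine ⟨s, hs, ?_⟩
    rwa [← Ideal.span, Ideal.span_singleton_mul_span_singleton, Ideal.span_singleton_le_iff_mem]
  | sup I₁ I₂ _ _ ih₁ ih₂ =>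
    obtain ⟨s, hs, hsI⟩ := ih₁ (le_sup_left.trans h)
    obtain ⟨t, ht, htI⟩ := ih₂ (le_sup_right.trans h)
    refine ⟨s * t, S.mul_mem hs ht, ?_⟩
    have shrink {r : R} (hr : r ∣ s * t) (I : Ideal R) :
        Ideal.span {s * t} * I ≤ Ideal.span {r} * I :=
      Ideal.mul_mono_left (Ideal.span_singleton_le_span_singleton.2 hr)
    rw [Ideal.mul_sup]
    exact sup_le ((shrink (dvd_mul_right s t) I₁).trans hsI)
      ((shrink (dvd_mul_left t s) I₂).trans htI)

open Polynomial in
theorem notMem_map_C_of_contentIdeal_map_eq_top {M : Ideal R} [M.IsPrime] {p : R[X]}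
    (hp : (p.map (algebraMap R (Localization.AtPrime M))).contentIdeal = ⊤) : p ∉ M.map C := by
  intro hmem
  apply (IsLocalRing.maximalIdeal.isMaximal (Localization.AtPrime M)).ne_top
  rw [← top_le_iff, ← hp, contentIdeal_map_eq_map_contentIdeal,
    ← Localization.AtPrime.map_eq_maximalIdeal]
  exact Ideal.map_mono (mem_map_C_iff_contentIdeal_le.1 hmem)

open Polynomial in
theorem valuationRing_localization_of_polynomial [IsDomain R] {M : Ideal R} [M.IsPrime]
    {Q : Ideal R[X]} [Q.IsPrime] (hQ : M.map C ≤ Q) (W : Type*) [CommRing W] [IsDomain W]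
    [Algebra R[X] W] [IsLocalization.AtPrime W Q] [ValuationRing W] :
    ValuationRing (Localization.AtPrime M) := by
  have descend {a b : R} (h : algebraMap R[X] W (C a) ∣ algebraMap R[X] W (C b)) :
      ∃ s ∈ M.primeCompl, a ∣ s * b := by
    obtain ⟨p, hp, hdvd⟩ := (algebraMap_dvd_algebraMap_iff_exists_mem Q.primeCompl).1 h
    obtain ⟨i, hi⟩ := not_forall.1 fun hpM ↦ hp (hQ (Ideal.mem_map_C_iff.2 hpM))
    exact ⟨p.coeff i, hi, by simpa using (C_dvd_iff_dvd_coeff _ _).1 hdvd i⟩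
  exact valuationRing_of_forall_exists_mem_dvd M.primeCompl fun a b ↦
    (ValuationRing.dvd_total _ _).imp descend descend

end Localization

section Semistar

variable {D K : Type*} [CommRing D] [Field K] [Algebra D K]
variable {star : Submodule D K → Submodule D K}

theorem IsSemistarOperation.star_le_star_of_le_star (hstar : IsSemistarOperation star)
    {E F : Submodule D K} (hE : E ≠ ⊥) (hF : F ≠ ⊥) (h : F ≤ star E) : star F ≤ star E :=
  hstar.star_star hE ▸ hstar.mono hF (hstar.ne_bot hE) h

theorem IsSemistarOperation.mul_mem_star_map_mulLeft (hstar : IsSemistarOperation star)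
    {E : Submodule D K} (hE : E ≠ ⊥) {x y : K} (hx : x ≠ 0) (hy : y ∈ star E) :
    x * y ∈ star (E.map (LinearMap.mulLeft D x)) :=
  hstar.map_smul x hx hE ▸ Submodule.mem_map_of_mem hy

theorem map_mulLeft_ne_bot {x : K} (hx : x ≠ 0) {E : Submodule D K} (hE : E ≠ ⊥) :
    E.map (LinearMap.mulLeft D x) ≠ ⊥ :=
  Submodule.map_bot (LinearMap.mulLeft D x) ▸
    (Submodule.map_injective_of_injective (mul_right_injective₀ hx)).ne hE

theorem mem_finTypeOp (hstar : IsSemistarOperation star) {E : Submodule D K} (hE : E ≠ ⊥) {x : K} :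
    x ∈ finTypeOp star E ↔
      ∃ F : Submodule D K, F ≠ ⊥ ∧ F.FG ∧ F ≤ E ∧ x ∈ star F := by
  have eq_iSup : finTypeOp star E =
      ⨆ F : {F : Submodule D K // F ≠ ⊥ ∧ F.FG ∧ F ≤ E}, star F := by
    simp only [finTypeOp, iSup_subtype, iSup_and]
  obtain ⟨y, hyE, hy⟩ := E.exists_mem_ne_zero_of_ne_bot hE
  have : Nonempty {F : Submodule D K // F ≠ ⊥ ∧ F.FG ∧ F ≤ E} :=
    ⟨⟨Submodule.span D {y}, by simpa using hy, Submodule.fg_span_singleton y, by simpa using hyE⟩⟩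
  rw [eq_iSup, Submodule.mem_iSup_of_directed]
  · simp only [Subtype.exists, exists_prop, and_assoc]
  · rintro ⟨F, hF, hFfg, hFE⟩ ⟨G, hG, hGfg, hGE⟩
    have hFG : F ⊔ G ≠ ⊥ := ne_bot_of_le_ne_bot hF le_sup_left
    exact ⟨⟨F ⊔ G, hFG, hFfg.sup hGfg, sup_le hFE hGE⟩,
      hstar.mono hF hFG le_sup_left, hstar.mono hG hFG le_sup_right⟩

theorem finTypeOp_eq_of_fg (hstar : IsSemistarOperation star) {E : Submodule D K} (hE : E ≠ ⊥)
    (hfg : E.FG) : finTypeOp star E = star E := by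
  ext x
  rw [mem_finTypeOp hstar hE]
  exact ⟨fun ⟨F, hF, _, hFE, hx⟩ ↦ hstar.mono hF hE hFE hx, fun hx ↦ ⟨E, hE, hfg, le_rfl, hx⟩⟩

theorem exists_fg_le_star_of_le_finTypeOp (hstar : IsSemistarOperation star)
    {E F : Submodule D K} (hE : E ≠ ⊥) (hF : F.FG) (h : F ≤ finTypeOp star E) :
    ∃ G : Submodule D K, G ≠ ⊥ ∧ G.FG ∧ G ≤ E ∧ F ≤ star G := by
  induction F, hF using Submodule.fg_induction with
  | singleton x =>
    obtain ⟨G, hG, hGfg, hGE, hx⟩ :=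
      (mem_finTypeOp hstar hE).1 (h (Submodule.mem_span_singleton_self x))
    exact ⟨G, hG, hGfg, hGE, by simpa using hx⟩
  | sup F₁ F₂ _ _ ih₁ ih₂ =>
    obtain ⟨G₁, hG₁, hfg₁, hE₁, h₁⟩ := ih₁ (le_sup_left.trans h)
    obtain ⟨G₂, hG₂, hfg₂, hE₂, h₂⟩ := ih₂ (le_sup_right.trans h)
    have hG : G₁ ⊔ G₂ ≠ ⊥ := ne_bot_of_le_ne_bot hG₁ le_sup_left
    exact ⟨G₁ ⊔ G₂, hG, hfg₁.sup hfg₂, sup_le hE₁ hE₂,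
      sup_le (h₁.trans (hstar.mono hG₁ hG le_sup_left))
        (h₂.trans (hstar.mono hG₂ hG le_sup_right))⟩

theorem le_finTypeOp (hstar : IsSemistarOperation star) {E : Submodule D K} (hE : E ≠ ⊥) :
    E ≤ finTypeOp star E := by
  intro x hx
  obtain ⟨y, hyE, hy⟩ := E.exists_mem_ne_zero_of_ne_bot hE
  have hne : Submodule.span D {x, y} ≠ ⊥ := fun h ↦ hy (by simp_all [Submodule.span_eq_bot])
  exact (mem_finTypeOp hstar hE).2 ⟨Submodule.span D {x, y}, hne, Submodule.fg_span (by simp),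
    Submodule.span_le.2 (Set.pair_subset hx hyE),
    hstar.le_star hne (Submodule.subset_span (Set.mem_insert x {y}))⟩

theorem map_mulLeft_finTypeOp_le (hstar : IsSemistarOperation star) {E : Submodule D K}
    (hE : E ≠ ⊥) {x : K} (hx : x ≠ 0) :
    (finTypeOp star E).map (LinearMap.mulLeft D x) ≤
      finTypeOp star (E.map (LinearMap.mulLeft D x)) := by
  rintro _ ⟨y, hy, rfl⟩
  obtain ⟨F, hF, hFfg, hFE, hyF⟩ := (mem_finTypeOp hstar hE).1 hy
  exact (mem_finTypeOp hstar (map_mulLeft_ne_bot hx hE)).2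
    ⟨F.map (LinearMap.mulLeft D x), map_mulLeft_ne_bot hx hF, hFfg.map _, Submodule.map_mono hFE,
      hstar.mul_mem_star_map_mulLeft hF hx hyF⟩

theorem IsSemistarOperation.finTypeOp (hstar : IsSemistarOperation star) :
    IsSemistarOperation (finTypeOp star) where
  ne_bot hE := ne_bot_of_le_ne_bot hE (le_finTypeOp hstar hE)
  map_smul x hx E hE := by
    refine le_antisymm (fun y hy ↦ ?_) (map_mulLeft_finTypeOp_le hstar hE hx)
    have hxE := map_mulLeft_ne_bot hx hE
    have hle := map_mulLeft_finTypeOp_le hstar hxE (inv_ne_zero hx)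
    rw [← Submodule.map_comp, ← LinearMap.mulLeft_mul, inv_mul_cancel₀ hx, LinearMap.mulLeft_one,
      Submodule.map_id] at hle
    exact ⟨x⁻¹ * y, hle ⟨y, hy, rfl⟩, mul_inv_cancel_left₀ hx y⟩
  mono {E F} hE hF hEF x hx := by
    obtain ⟨G, hG, hGfg, hGE, hxG⟩ := (mem_finTypeOp hstar hE).1 hx
    exact (mem_finTypeOp hstar hF).2 ⟨G, hG, hGfg, hGE.trans hEF, hxG⟩
  le_star := le_finTypeOp hstar
  star_star {E} hE := by
    have hE' := ne_bot_of_le_ne_bot hE (le_finTypeOp hstar hE)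
    refine le_antisymm (fun x hx ↦ ?_) (le_finTypeOp hstar hE')
    obtain ⟨F, hF, hFfg, hFE, hxF⟩ := (mem_finTypeOp hstar hE').1 hx
    obtain ⟨G, hG, hGfg, hGE, hFG⟩ := exists_fg_le_star_of_le_finTypeOp hstar hE hFfg hFE
    exact (mem_finTypeOp hstar hE).2
      ⟨G, hG, hGfg, hGE, hstar.star_le_star_of_le_star hG hF hFG hxF⟩

/-- The quasi-`⋆`-closure `I^⋆ ∩ D` of an ideal `I` of `D`, so that the quasi-`⋆`-ideals are the
nonzero ideals that equal their closure. -/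
def starClosure (star : Submodule D K → Submodule D K) (I : Ideal D) : Ideal D :=
  (star (idealExt K I)).comap (Algebra.linearMap D K)

theorem mem_starClosure {I : Ideal D} {d : D} :
    d ∈ starClosure star I ↔ algebraMap D K d ∈ star (idealExt K I) :=
  Iff.rfl

theorem quasiStarIdeal_iff {I : Ideal D} :
    QuasiStarIdeal star I ↔ I ≠ ⊥ ∧ starClosure star I = I :=
  Iff.rfl

theorem idealExt_ne_bot [FaithfulSMul D K] {I : Ideal D} (hI : I ≠ ⊥) : idealExt K I ≠ ⊥ :=
  Submodule.map_bot (Algebra.linearMap D K) ▸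
    (Submodule.map_injective_of_injective (FaithfulSMul.algebraMap_injective D K)).ne hI

theorem idealExt_span_singleton_mul (d : D) (I : Ideal D) :
    idealExt K (Ideal.span {d} * I) =
      (idealExt K I).map (LinearMap.mulLeft D (algebraMap D K d)) := by
  ext x
  simp [idealExt, Ideal.mem_span_singleton_mul]

variable [FaithfulSMul D K] (hstar : IsSemistarOperation star) {I J : Ideal D}
include hstar

theorem le_starClosure (hI : I ≠ ⊥) : I ≤ starClosure star I := fun _ hx ↦
  hstar.le_star (idealExt_ne_bot hI) (Submodule.mem_map_of_mem hx)

theorem starClosure_mono (hI : I ≠ ⊥) (hIJ : I ≤ J) : starClosure star I ≤ starClosure star J :=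
  Submodule.comap_mono <| hstar.mono (idealExt_ne_bot hI)
    (idealExt_ne_bot (ne_bot_of_le_ne_bot hI hIJ)) (Submodule.map_mono hIJ)

theorem starClosure_starClosure (hI : I ≠ ⊥) :
    starClosure star (starClosure star I) = starClosure star I := by
  have hI' := ne_bot_of_le_ne_bot hI (le_starClosure hstar hI)
  refine le_antisymm (Submodule.comap_mono ?_) (le_starClosure hstar hI')
  exact hstar.star_le_star_of_le_star (idealExt_ne_bot hI) (idealExt_ne_bot hI')
    (Submodule.map_comap_le _ _)

theorem quasiStarIdeal_starClosure (hI : I ≠ ⊥) : QuasiStarIdeal star (starClosure star I) :=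
  ⟨ne_bot_of_le_ne_bot hI (le_starClosure hstar hI), starClosure_starClosure hstar hI⟩

theorem mul_mem_starClosure_span_singleton_mul {d x : D} (hd : d ≠ 0) (hI : I ≠ ⊥) :
    d * x ∈ starClosure star (Ideal.span {d} * I) ↔ x ∈ starClosure star I := by
  have hdK : algebraMap D K d ≠ 0 := by simpa using hd
  rw [mem_starClosure, mem_starClosure, idealExt_span_singleton_mul,
    hstar.map_smul _ hdK (idealExt_ne_bot hI), map_mul]
  exact (mul_right_injective₀ hdK).mem_set_image

theorem star_idealExt_eq_star_one_iff (hI : I ≠ ⊥) :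
    star (idealExt K I) = star 1 ↔ starClosure star I = ⊤ := by
  have one_eq : (1 : Submodule D K) = idealExt K ⊤ := by
    rw [idealExt, Submodule.map_top, Submodule.one_eq_range]
  have hE := idealExt_ne_bot (K := K) hI
  have hone : (1 : Submodule D K) ≠ ⊥ := one_ne_zero
  constructor
  · intro h
    rw [starClosure, h, ← top_le_iff, ← Submodule.map_le_iff_le_comap]
    exact one_eq.ge.trans (hstar.le_star hone)
  · intro h
    refine le_antisymm (hstar.mono hE hone (one_eq ▸ Submodule.map_mono le_top)) ?_
    refine hstar.star_le_star_of_le_star hE hone (one_eq ▸ ?_)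
    exact Submodule.map_le_iff_le_comap.2 h.ge

theorem QuasiStarMaximal.isPrime [IsDomain D] {M : Ideal D} (hM : QuasiStarMaximal star M) :
    M.IsPrime := by
  obtain ⟨⟨hM0, hMcl⟩, hMtop, hmax⟩ := hM
  refine ⟨hMtop, fun {a b} hab ↦ or_iff_not_imp_left.2 fun ha ↦ ?_⟩
  set J := M ⊔ Ideal.span {a}
  have hJ0 : J ≠ ⊥ := ne_bot_of_le_ne_bot hM0 le_sup_left
  have hJle := le_starClosure hstar hJ0
  have closure_eq_top : starClosure star J = ⊤ := by
    by_contra hne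
    have hJM := hmax _ (quasiStarIdeal_starClosure hstar hJ0) hne (le_sup_left.trans hJle)
    exact ha (hJM ▸ hJle (Ideal.mem_sup_right (Ideal.mem_span_singleton_self a)))
  obtain rfl | hb := eq_or_ne b 0
  · exact M.zero_mem
  have bJ_le : Ideal.span {b} * J ≤ M := by
    rw [Ideal.mul_sup, Ideal.span_singleton_mul_span_singleton, mul_comm b,
      sup_le_iff, Ideal.span_singleton_le_iff_mem]
    exact ⟨Ideal.mul_le_right, hab⟩
  have hbJ0 : Ideal.span {b} * J ≠ ⊥ := by simp [hb, hJ0]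
  have b_mem : b * 1 ∈ starClosure star (Ideal.span {b} * J) :=
    (mul_mem_starClosure_span_singleton_mul hstar hb hJ0).2 (closure_eq_top ▸ Submodule.mem_top)
  rw [← hMcl, ← mul_one b]
  exact starClosure_mono hstar hbJ0 bJ_le b_mem

theorem starClosure_finTypeOp_of_fg (hI : I ≠ ⊥) (hfg : I.FG) :
    starClosure (finTypeOp star) I = starClosure star I := by
  rw [starClosure, finTypeOp_eq_of_fg hstar (idealExt_ne_bot hI) (Submodule.FG.map _ hfg),
    starClosure]

theorem mem_starClosure_finTypeOp (hI : I ≠ ⊥) {d : D} :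
    d ∈ starClosure (finTypeOp star) I ↔
      ∃ F : Ideal D, F ≠ ⊥ ∧ F.FG ∧ F ≤ I ∧ d ∈ starClosure star F := by
  have hinj : Function.Injective (Algebra.linearMap D K) := FaithfulSMul.algebraMap_injective D K
  rw [mem_starClosure, mem_finTypeOp hstar (idealExt_ne_bot hI)]
  constructor
  · rintro ⟨E, hE, hfg, hEI, hd⟩
    obtain ⟨F, rfl⟩ : ∃ F : Ideal D, idealExt K F = E :=
      ⟨E.comap (Algebra.linearMap D K),
        Submodule.map_comap_eq_self (hEI.trans LinearMap.map_le_range)⟩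
    refine ⟨F, ?_, Submodule.fg_of_fg_map_injective _ hinj hfg,
      (Submodule.map_le_map_iff_of_injective hinj _ _).1 hEI, hd⟩
    rintro rfl
    exact hE (Submodule.map_bot _)
  · rintro ⟨F, hF, hfg, hFI, hd⟩
    exact ⟨idealExt K F, idealExt_ne_bot hF, Submodule.FG.map _ hfg, Submodule.map_mono hFI, hd⟩

theorem exists_fg_starClosure_eq_top (hI : I ≠ ⊥) (h : starClosure (finTypeOp star) I = ⊤) :
    ∃ F : Ideal D, F ≠ ⊥ ∧ F.FG ∧ F ≤ I ∧ starClosure star F = ⊤ := by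
  simpa only [← Ideal.eq_top_iff_one] using
    (mem_starClosure_finTypeOp hstar hI).1 ((Ideal.eq_top_iff_one _).1 h)

theorem QuasiStarIdeal.finTypeOp (hI : QuasiStarIdeal star I) :
    QuasiStarIdeal (finTypeOp star) I := by
  refine ⟨hI.1, le_antisymm (fun d hd ↦ ?_) (le_starClosure hstar.finTypeOp hI.1)⟩
  obtain ⟨F, hF, -, hFI, hdF⟩ := (mem_starClosure_finTypeOp hstar hI.1).1 hd
  rw [← (quasiStarIdeal_iff.1 hI).2]
  exact starClosure_mono hstar hF hFI hdF

theorem exists_le_quasiStarMaximal_finTypeOp (hI : I ≠ ⊥)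
    (h : starClosure (finTypeOp star) I ≠ ⊤) :
    ∃ M : Ideal D, I ≤ M ∧ QuasiStarMaximal (finTypeOp star) M := by
  have hfin := hstar.finTypeOp
  obtain ⟨M, hIM, ⟨hM0, hMtop⟩, hmax⟩ := zorn_le_nonempty₀
    {J : Ideal D | J ≠ ⊥ ∧ starClosure (finTypeOp star) J ≠ ⊤}
    (fun c hc hchain J hJ ↦ by
      have hne : sSup c ≠ ⊥ := ne_bot_of_le_ne_bot (hc hJ).1 (le_sSup hJ)
      refine ⟨sSup c, ⟨hne, fun htop ↦ ?_⟩, fun _ ↦ le_sSup⟩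
      obtain ⟨F, hF, hFfg, hFc, hFtop⟩ := exists_fg_starClosure_eq_top hstar hne htop
      have compact := (CompleteLattice.isCompactElement_iff_le_of_directed_sSup_le _ F).1
        ((Submodule.fg_iff_compact F).1 hFfg)
      obtain ⟨L, hLc, hFL⟩ := compact c ⟨J, hJ⟩ hchain.directedOn hFc
      rw [← starClosure_finTypeOp_of_fg hstar hF hFfg] at hFtop
      exact (hc hLc).2 (top_le_iff.1 (hFtop ▸ starClosure_mono hfin hF hFL))) I ⟨hI, h⟩
  have hMcl : starClosure (finTypeOp star) M = M := by
    have hle := le_starClosure hfin hM0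
    refine le_antisymm (hmax ⟨ne_bot_of_le_ne_bot hM0 hle, ?_⟩ hle) hle
    rwa [starClosure_starClosure hfin hM0]
  refine ⟨M, hIM, ⟨hM0, hMcl⟩, hMcl ▸ hMtop, fun J hJ hJtop hMJ ↦ ?_⟩
  exact le_antisymm (hmax ⟨hJ.1, (quasiStarIdeal_iff.1 hJ).2.trans_ne hJtop⟩ hMJ) hMJ

theorem starClosure_finTypeOp_eq_top_iff (hI : I ≠ ⊥) :
    starClosure (finTypeOp star) I = ⊤ ↔
      ∀ M : Ideal D, QuasiStarMaximal (finTypeOp star) M → ¬ I ≤ M := by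
  constructor
  · intro h M hM hIM
    apply hM.2.1
    rw [← top_le_iff, ← h, ← (quasiStarIdeal_iff.1 hM.1).2]
    exact starClosure_mono hstar.finTypeOp hI hIM
  · intro h
    by_contra hne
    obtain ⟨M, hIM, hM⟩ := exists_le_quasiStarMaximal_finTypeOp hstar hI hne
    exact h M hM hIM

theorem exists_fg_le_starClosure_of_starNoetherian (hN : StarNoetherian star) (hI : I ≠ ⊥) :
    ∃ F : Ideal D, F ≠ ⊥ ∧ F.FG ∧ F ≤ I ∧ I ≤ starClosure star F := by
  have : WellFoundedGT {J : Ideal D // QuasiStarIdeal star J} := by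
    rw [wellFoundedGT_iff_monotone_chain_condition]
    intro c
    obtain ⟨n, hn⟩ := hN ⟨fun n ↦ c n, fun _ _ h ↦ c.mono h⟩ fun n ↦ (c n).2
    exact ⟨n, fun m hm ↦ Subtype.ext (hn m hm).symm⟩
  let closure : {F : Ideal D // F ≠ ⊥ ∧ F.FG ∧ F ≤ I} → {J : Ideal D // QuasiStarIdeal star J} :=
    fun F ↦ ⟨starClosure star F, quasiStarIdeal_starClosure hstar F.2.1⟩
  obtain ⟨y, hyI, hy⟩ := Submodule.exists_mem_ne_zero_of_ne_bot hI
  have hnonempty : Nonempty {F : Ideal D // F ≠ ⊥ ∧ F.FG ∧ F ≤ I} :=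
    ⟨⟨Ideal.span {y}, by simpa using hy, Submodule.fg_span_singleton y,
      (Ideal.span_singleton_le_iff_mem I).2 hyI⟩⟩
  obtain ⟨_, ⟨⟨F, hF, hfg, hFI⟩, rfl⟩, hmax⟩ :=
    wellFounded_gt.has_min (Set.range closure) (Set.range_nonempty closure)
  refine ⟨F, hF, hfg, hFI, fun x hx ↦ ?_⟩
  have hFx : F ⊔ Ideal.span {x} ≠ ⊥ := ne_bot_of_le_ne_bot hF le_sup_left
  have hle := starClosure_mono hstar hF (le_sup_left : F ≤ F ⊔ Ideal.span {x})
  have heq := eq_of_le_of_not_lt hle <| hmax _ ⟨⟨F ⊔ Ideal.span {x}, hFx,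
    Submodule.FG.sup hfg (Submodule.fg_span_singleton x),
    sup_le hFI ((Ideal.span_singleton_le_iff_mem I).2 hx)⟩, rfl⟩
  exact heq ▸ le_starClosure hstar hFx (Ideal.mem_sup_right (Ideal.mem_span_singleton_self x))

end Semistar

section Nagata

open Polynomial

variable {D K : Type*} [CommRing D] [Field K] [Algebra D K] [FaithfulSMul D K]
variable {star : Submodule D K → Submodule D K} (hstar : IsSemistarOperation star)
include hstar

theorem starClosure_contentIdeal_eq_top_iff {p : D[X]} (hp : p ≠ 0) :
    starClosure star p.contentIdeal = ⊤ ↔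
      ∀ M : Ideal D, QuasiStarMaximal (finTypeOp star) M → p ∉ M.map C := by
  have hc : p.contentIdeal ≠ ⊥ := by rwa [Ne, contentIdeal_eq_bot_iff]
  rw [← starClosure_finTypeOp_of_fg hstar hc p.contentIdeal_FG,
    starClosure_finTypeOp_eq_top_iff hstar hc]
  simp only [mem_map_C_iff_contentIdeal_le]

variable [IsDomain D]

-- A nonzero polynomial satisfies `c(p)^⋆ = D^⋆` iff it avoids the primes `M[X]`, `M`
-- quasi-`⋆_f`-maximal, so these polynomials already form a multiplicatively closed set.
theorem mem_nagataMonoid_iff {p : D[X]} :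
    p ∈ nagataMonoid star ↔ p ≠ 0 ∧ starClosure star p.contentIdeal = ⊤ := by
  have generator_iff {p : D[X]} :
      p ∈ {p : D[X] | p ≠ 0 ∧ star (idealExt K (_root_.contentIdeal p)) = star 1} ↔
        p ≠ 0 ∧ starClosure star p.contentIdeal = ⊤ := by
    refine and_congr_right fun hp ↦ ?_
    rw [contentIdeal_eq_polynomial_contentIdeal,
      star_idealExt_eq_star_one_iff hstar (by rwa [Ne, contentIdeal_eq_bot_iff])]
  refine ⟨fun hp ↦ ?_, fun hp ↦ Submonoid.subset_closure (generator_iff.2 hp)⟩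
  induction hp using Submonoid.closure_induction with
  | mem p hp => exact generator_iff.1 hp
  | one =>
    refine ⟨one_ne_zero, top_le_iff.1 (contentIdeal_one.ge.trans (le_starClosure hstar ?_))⟩
    exact contentIdeal_one.trans_ne top_ne_bot
  | mul p q _ _ hp hq =>
    refine ⟨mul_ne_zero hp.1 hq.1, ?_⟩
    rw [starClosure_contentIdeal_eq_top_iff hstar (mul_ne_zero hp.1 hq.1)]
    intro M hM hpq
    have := hM.isPrime hstar.finTypeOp
    exact (Ideal.isPrime_map_C_of_isPrime.mem_or_mem hpq).elim
      ((starClosure_contentIdeal_eq_top_iff hstar hp.1).1 hp.2 M hM)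
      ((starClosure_contentIdeal_eq_top_iff hstar hq.1).1 hq.2 M hM)

theorem nagataMonoid_le_nonZeroDivisors : nagataMonoid star ≤ nonZeroDivisors D[X] := fun _ hp ↦
  mem_nonZeroDivisors_of_ne_zero ((mem_nagataMonoid_iff hstar).1 hp).1

theorem isDomain_nagataRing : IsDomain (NagataRing star) :=
  IsLocalization.isDomain_localization (nagataMonoid_le_nonZeroDivisors hstar)

theorem exists_mem_nagataMonoid_of_forall_not_le {A : Ideal D[X]} (hA : A ≠ ⊥)
    (h : ∀ M : Ideal D, QuasiStarMaximal (finTypeOp star) M → ¬ A ≤ M.map C) :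
    ∃ p ∈ A, p ∈ nagataMonoid star := by
  have hI : idealContent A ≠ ⊥ := by rwa [Ne, idealContent_eq_bot_iff]
  simp only [le_map_C_iff_idealContent_le] at h
  obtain ⟨F, hF, hfg, hFA, hFtop⟩ := exists_fg_starClosure_eq_top hstar hI
    ((starClosure_finTypeOp_eq_top_iff hstar hI).2 h)
  obtain ⟨p, hpA, hFp⟩ := exists_mem_le_contentIdeal_of_fg hfg hFA
  have hp0 : p ≠ 0 := by
    rw [Ne, ← contentIdeal_eq_bot_iff]
    exact ne_bot_of_le_ne_bot hF hFp
  exact ⟨p, hpA, (mem_nagataMonoid_iff hstar).2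
    ⟨hp0, top_le_iff.1 (hFtop ▸ starClosure_mono hstar hF hFp)⟩⟩

-- If `y ∈ I^⋆` were outside `I·D_M`, then `I ⊆ yM·D_M` since `D_M` is a valuation ring; clearing
-- the denominators of the finitely many generators gives `s ∉ M` with `sI ⊆ yM`, whence
-- `sy ∈ sI^⋆ ⊆ yM^⋆` and `s ∈ M^⋆ ∩ D = M`.
theorem starClosure_le_comap_map_atPrime {M : Ideal D} [M.IsPrime]
    [ValuationRing (Localization.AtPrime M)] (hM : QuasiStarIdeal star M) {I : Ideal D}
    (hI : I ≠ ⊥) (hfg : I.FG) :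
    starClosure star I ≤
      (I.map (algebraMap D (Localization.AtPrime M))).comap
        (algebraMap D (Localization.AtPrime M)) := by
  set V := Localization.AtPrime M
  intro y hy
  by_contra hyI
  have hy0 : y ≠ 0 := fun h ↦ hyI (h ▸ zero_mem _)
  have map_le : I.map (algebraMap D V) ≤ (Ideal.span {y} * M).map (algebraMap D V) := by
    refine Ideal.map_le_iff_le_comap.2 fun x hx ↦ ?_
    have not_dvd : ¬ algebraMap D V x ∣ algebraMap D V y := fun h ↦
      hyI ((I.map (algebraMap D V)).mem_of_dvd h (Ideal.mem_map_of_mem _ hx))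
    obtain ⟨v, hv⟩ := (ValuationRing.dvd_total _ _).resolve_left not_dvd
    have hvM : v ∈ M.map (algebraMap D V) := by
      rw [Localization.AtPrime.map_eq_maximalIdeal]
      exact fun hunit ↦ not_dvd (hv ▸ hunit.mul_right_dvd.2 dvd_rfl)
    rw [Ideal.mem_comap, hv, Ideal.map_mul]
    exact Ideal.mul_mem_mul (Ideal.mem_map_of_mem _ (Ideal.mem_span_singleton_self y)) hvM
  obtain ⟨s, hs, hle⟩ := exists_mem_span_singleton_mul_le_of_fg M.primeCompl hfg map_le
  have hs0 : s ≠ 0 := fun h ↦ hs (h ▸ M.zero_mem)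
  have hsI : Ideal.span {s} * I ≠ ⊥ := by simp [hs0, hI]
  have sy_mem : y * s ∈ starClosure star (Ideal.span {y} * M) := mul_comm s y ▸
    starClosure_mono hstar hsI hle ((mul_mem_starClosure_span_singleton_mul hstar hs0 hI).2 hy)
  rw [mul_mem_starClosure_span_singleton_mul hstar hy0 hM.1, (quasiStarIdeal_iff.1 hM).2] at sy_mem
  exact hs sy_mem

theorem exists_notMem_map_C_and_dvd_mul {M : Ideal D} [M.IsPrime]
    [ValuationRing (Localization.AtPrime M)] (hM : QuasiStarIdeal star M) {f g : D[X]}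
    (hf : f ≠ 0) (h : g.contentIdeal ≤ starClosure star f.contentIdeal) :
    ∃ p ∉ M.map C, f ∣ p * g := by
  let V := Localization.AtPrime M
  let φ := algebraMap D V
  have hφ : Function.Injective φ :=
    IsLocalization.injective _ M.primeCompl_le_nonZeroDivisors
  have content_le : (g.map φ).contentIdeal ≤ (f.map φ).contentIdeal := by
    simp only [contentIdeal_map_eq_map_contentIdeal]
    refine Ideal.map_le_iff_le_comap.2 (h.trans ?_)
    exact starClosure_le_comap_map_atPrime hstar hM (by rwa [Ne, contentIdeal_eq_bot_iff])
      f.contentIdeal_FG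
  obtain ⟨r, hr, hdvd⟩ := exists_contentIdeal_eq_top_and_dvd_mul
    ((Polynomial.map_ne_zero_iff hφ).2 hf) content_le
  let : Algebra D[X] V[X] := Polynomial.algebra ..
  have := Polynomial.isLocalization M.primeCompl V
  obtain ⟨⟨p, ⟨_, s, hs, rfl⟩⟩, hps⟩ := IsLocalization.surj (M.primeCompl.map C) r
  have hu : IsUnit (algebraMap D[X] V[X] (C s)) :=
    IsLocalization.map_units _ (⟨C s, s, hs, rfl⟩ : M.primeCompl.map C)
  change r * algebraMap D[X] V[X] (C s) = p.map φ at hps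
  have hp : (p.map φ).contentIdeal = ⊤ := top_le_iff.1 <|
    hr.ge.trans (contentIdeal_le_contentIdeal_of_dvd (hps ▸ hu.mul_right_dvd.2 dvd_rfl))
  have hdvd' : f.map φ ∣ (p * g).map φ := by
    rw [Polynomial.map_mul, ← hps, mul_right_comm]
    exact hdvd.mul_right _
  obtain ⟨_, ⟨t, ht, rfl⟩, htdvd⟩ :=
    (algebraMap_dvd_algebraMap_iff_exists_mem (A := V[X]) (M.primeCompl.map C)).1 hdvd'
  refine ⟨C t * p, fun hmem ↦ ?_, by rwa [mul_assoc]⟩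
  exact (Ideal.isPrime_map_C_of_isPrime.mem_or_mem hmem).elim
    (fun h ↦ ht (by simpa using mem_map_C_iff_contentIdeal_le.1 h))
    (notMem_map_C_of_contentIdeal_map_eq_top hp)

theorem algebraMap_nagataRing_dvd_of_contentIdeal_le (hP : StarPMD star) {f g : D[X]}
    (hf : f ≠ 0) (h : g.contentIdeal ≤ starClosure star f.contentIdeal) :
    algebraMap D[X] (NagataRing star) f ∣ algebraMap D[X] (NagataRing star) g := by
  rw [algebraMap_dvd_algebraMap_iff_exists_mem (nagataMonoid star)]
  let A : Ideal D[X] := Submodule.comap (LinearMap.mulRight D[X] g) (Ideal.span {f})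
  have mem_A {p : D[X]} : p ∈ A ↔ f ∣ p * g := Ideal.mem_span_singleton
  have hA : A ≠ ⊥ := fun hbot ↦ hf <| (Submodule.mem_bot D[X]).1 <|
    hbot ▸ mem_A.2 (dvd_mul_right f g)
  suffices ∃ p ∈ A, p ∈ nagataMonoid star by
    obtain ⟨p, hpA, hp⟩ := this
    exact ⟨p, hp, mem_A.1 hpA⟩
  refine exists_mem_nagataMonoid_of_forall_not_le hstar hA fun M hM hAM ↦ ?_
  have := hM.isPrime hstar.finTypeOp
  obtain ⟨_, _⟩ := hP M hM
  rw [← starClosure_finTypeOp_of_fg hstar (by rwa [Ne, contentIdeal_eq_bot_iff])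
    f.contentIdeal_FG] at h
  obtain ⟨p, hpM, hp⟩ := exists_notMem_map_C_and_dvd_mul hstar.finTypeOp hM.1 hf h
  exact hpM (hAM (mem_A.2 hp))

theorem isPrincipalIdealRing_nagataRing_of_starDedekind (h : StarDedekind star) :
    IsPrincipalIdealRing (NagataRing star) := by
  obtain ⟨hN, hP⟩ := h
  refine ⟨fun J ↦ ?_⟩
  set A := J.comap (algebraMap D[X] (NagataRing star))
  have hJ : A.map (algebraMap D[X] (NagataRing star)) = J :=
    IsLocalization.map_under (nagataMonoid star) _ J
  obtain hA | hA := eq_or_ne A ⊥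
  · rw [← hJ, hA, Ideal.map_bot]
    exact bot_isPrincipal
  have hI : idealContent A ≠ ⊥ := by rwa [Ne, idealContent_eq_bot_iff]
  obtain ⟨F, hF, hfg, hFA, hle⟩ := exists_fg_le_starClosure_of_starNoetherian hstar hN hI
  obtain ⟨f, hfA, hFf⟩ := exists_mem_le_contentIdeal_of_fg hfg hFA
  have hf : f ≠ 0 := by
    rw [Ne, ← contentIdeal_eq_bot_iff]
    exact ne_bot_of_le_ne_bot hF hFf
  refine ⟨algebraMap D[X] (NagataRing star) f, le_antisymm ?_ ?_⟩
  · rw [← hJ, Ideal.map_le_iff_le_comap]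
    intro g hg
    exact Ideal.mem_span_singleton.2 <| algebraMap_nagataRing_dvd_of_contentIdeal_le hstar hP hf <|
      (contentIdeal_le_idealContent hg).trans (hle.trans (starClosure_mono hstar hF hFf))
  · exact (Ideal.span_singleton_le_iff_mem J).2 hfA

theorem QuasiStarIdeal.comap_map_nagataRing {I : Ideal D}
    (hI : QuasiStarIdeal (_root_.finTypeOp star) I) :
    (I.map (algebraMap D (NagataRing star))).comap (algebraMap D (NagataRing star)) = I := by
  refine le_antisymm (fun d hd ↦ ?_) Ideal.le_comap_map
  rw [IsScalarTower.algebraMap_eq D D[X] (NagataRing star), ← Ideal.map_map, Ideal.mem_comap,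
    RingHom.comp_apply, IsLocalization.algebraMap_mem_map_algebraMap_iff (nagataMonoid star)] at hd
  obtain ⟨p, hpN, hpd⟩ := hd
  obtain ⟨hp, hptop⟩ := (mem_nagataMonoid_iff hstar).1 hpN
  have hc : p.contentIdeal ≠ ⊥ := by rwa [Ne, contentIdeal_eq_bot_iff]
  rw [← starClosure_finTypeOp_of_fg hstar hc p.contentIdeal_FG] at hptop
  obtain rfl | hd := eq_or_ne d 0
  · exact I.zero_mem
  have hle : Ideal.span {d} * p.contentIdeal ≤ I := by
    have coeff_le : p.contentIdeal ≤ Submodule.comap (LinearMap.mulLeft D d) I :=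
      contentIdeal_le_iff_forall_coeff_mem.2 fun i ↦ by
        simpa [mul_comm] using Ideal.mem_map_C_iff.1 hpd i
    exact Ideal.span_singleton_mul_le_iff.2 fun _ hz ↦ coeff_le hz
  have hdp : Ideal.span {d} * p.contentIdeal ≠ ⊥ := by simp [hd, hp]
  rw [← (quasiStarIdeal_iff.1 hI).2, ← mul_one d]
  exact starClosure_mono hstar.finTypeOp hdp hle
    ((mul_mem_starClosure_span_singleton_mul hstar.finTypeOp hd hc).2 (hptop ▸ Submodule.mem_top))

theorem starNoetherian_of_isNoetherianRing_nagataRing [IsNoetherianRing (NagataRing star)] :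
    StarNoetherian star := by
  intro c hc
  let φ := algebraMap D (NagataRing star)
  obtain ⟨n, hn⟩ := monotone_stabilizes_iff_noetherian.2 ‹IsNoetherianRing (NagataRing star)›
    ⟨fun n ↦ (c n).map φ, fun _ _ h ↦ Ideal.map_mono (c.mono h)⟩
  refine ⟨n, fun m hm ↦ ?_⟩
  have comap_map (k : ℕ) : ((c k).map φ).comap φ = c k :=
    ((hc k).finTypeOp hstar).comap_map_nagataRing hstar
  rw [← comap_map m, ← comap_map n]
  exact congrArg _ (hn m hm).symm

theorem starPMD_of_isDedekindDomain_nagataRing [IsDedekindDomain (NagataRing star)] :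
    StarPMD star := by
  intro M _ hM
  let φ := algebraMap D[X] (NagataRing star)
  have map_ne_top : (M.map C).map φ ≠ ⊤ := by
    intro htop
    apply hM.2.1
    rw [← hM.1.comap_map_nagataRing hstar, IsScalarTower.algebraMap_eq D D[X] (NagataRing star),
      ← Ideal.map_map]
    exact htop ▸ Ideal.comap_top
  obtain ⟨P, _, hP⟩ := Ideal.exists_le_maximal _ map_ne_top
  have := IsLocalization.isLocalization_isLocalization_atPrime_isLocalization
    (nagataMonoid star) (Localization.AtPrime P) P
  exact ⟨inferInstance, valuationRing_localization_of_polynomial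
    (Ideal.map_le_iff_le_comap.1 hP) (Localization.AtPrime P)⟩

end Nagata

theorem starDedekind_iff_nagataRing_PID_iff_dedekind_general {D K : Type*} [CommRing D]
    [IsDomain D] [Field K] [Algebra D K] [FaithfulSMul D K]
    (star : Submodule D K → Submodule D K) (hstar : IsSemistarOperation star) :
    (StarDedekind star ↔
      (IsDomain (NagataRing star) ∧ IsPrincipalIdealRing (NagataRing star))) ∧
    (StarDedekind star ↔ IsDedekindDomain (NagataRing star)) := by
  have pid_of_starDedekind (h : StarDedekind star) :
      IsDomain (NagataRing star) ∧ IsPrincipalIdealRing (NagataRing star) :=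
    ⟨isDomain_nagataRing hstar, isPrincipalIdealRing_nagataRing_of_starDedekind hstar h⟩
  have dedekind_of_pid :
      IsDomain (NagataRing star) ∧ IsPrincipalIdealRing (NagataRing star) →
        IsDedekindDomain (NagataRing star) := fun ⟨_, _⟩ ↦ inferInstance
  have starDedekind_of_dedekind (_ : IsDedekindDomain (NagataRing star)) : StarDedekind star :=
    ⟨starNoetherian_of_isNoetherianRing_nagataRing hstar,
      starPMD_of_isDedekindDomain_nagataRing hstar⟩
  exact ⟨⟨pid_of_starDedekind, starDedekind_of_dedekind ∘ dedekind_of_pid⟩,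
    ⟨dedekind_of_pid ∘ pid_of_starDedekind, starDedekind_of_dedekind⟩⟩

section Statement

variable {D : Type*} [CommRing D] [IsDomain D]
variable {K : Type*} [Field K] [Algebra D K] [IsFractionRing D K]

/-- `D` an integral domain, `⋆` a semistar operation. TFAE:
(1) `D` is a ⋆-Dedekind domain; (2) the Nagata ring `Na(D,⋆)` is a principal ideal
domain; (3) `Na(D,⋆)` is a Dedekind domain. -/
theorem starDedekind_iff_nagataRing_PID_iff_dedekind
    (star : Submodule D K → Submodule D K) (hstar : IsSemistarOperation star) :
    (StarDedekind star ↔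
      (IsDomain (NagataRing star) ∧ IsPrincipalIdealRing (NagataRing star))) ∧
    (StarDedekind star ↔ IsDedekindDomain (NagataRing star)) :=
  starDedekind_iff_nagataRing_PID_iff_dedekind_general star hstar

end Statement
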